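/- Let q ∈ (0,1) and let n ≥ 9 be an integer. If n > (9(1+q)/(4(1−q)))², then q^n/(1 − q^{2n}) ≤ 7 q^{√n}/(37 n²). -/

import Mathlib

open Real

theorem tail_bound_of_n_large (q : ℝ) (hq : 0 < q) (hq1 : q < 1)
    (n : ℕ) (hn : 9 ≤ n) (h : (n : ℝ) > (9 * (1 + q) / (4 * (1 - q))) ^ 2) :
    q ^ n / (1 - q ^ (2 * n)) ≤ 7 * q ^ Real.sqrt n / (37 * (n : ℝ) ^ 2) := by
  have hn' : (9 : ℝ) ≤ n := by exact_mod_cast hn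
  have hq2 : 0 < 1 - q := by linarith
  obtain ⟨s, hs⟩ : ∃ s, s = Real.sqrt n := ⟨_, rfl⟩
  have hsn : (n : ℝ) = s ^ 2 := by rw [hs, Real.sq_sqrt (by positivity)]
  have hs3 : 3 ≤ s := by
    rw [hs]; apply Real.le_sqrt_of_sq_le; linarith
  have h1 : 9 * (1 + q) / (4 * (1 - q)) < s := by
    rw [hs]; exact Real.lt_sqrt_of_sq_lt h
  obtain ⟨x, hx⟩ : ∃ x, x = - Real.log q := ⟨_, rfl⟩
  have hqx : q = Real.exp (-x) := by rw [hx, neg_neg, Real.exp_log hq]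
  have hxl : 9 / (2 * s) ≤ x := by
    have h2 := Real.le_log_one_add_of_nonneg (x := q⁻¹ - 1)
      (by have := (one_le_inv₀ hq).2 hq1.le; linarith)
    rw [show 1 + (q⁻¹ - 1) = q⁻¹ by ring, Real.log_inv, ← hx] at h2
    refine le_trans ?_ h2
    have e : 2 * (q⁻¹ - 1) / (q⁻¹ - 1 + 2) = 2 * (1 - q) / (1 + q) := by
      have : q⁻¹ - 1 + 2 = (1 + q) / q := by field_simp; ring
      rw [this]; field_simp
    rw [e, div_le_div_iff₀ (by positivity) (by positivity)]
    rw [div_lt_iff₀ (by positivity)] at h1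
    nlinarith
  have hxs : 9 / 2 ≤ x * s := by
    rw [div_le_iff₀ (by positivity)] at hxl; linarith
  have hqn : q ^ n = Real.exp (-(x * s ^ 2)) := by
    rw [hqx, ← Real.exp_nat_mul, hsn]; ring_nf
  have hqs : q ^ s = Real.exp (-(x * s)) := by
    rw [hqx, ← Real.exp_mul]; ring_nf
  have hhalf : q ^ n ≤ 1 / 2 := by
    rw [hqn, Real.exp_neg, ← one_div]
    apply one_div_le_one_div_of_le (by norm_num)
    have := Real.add_one_le_exp (x * s ^ 2)
    nlinarith
  have hqnpos : 0 < q ^ n := by positivity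
  have hden : 1 / 2 ≤ 1 - q ^ (2 * n) := by
    rw [mul_comm, pow_mul]; nlinarith
  have key : 74 * s ^ 4 ≤ 7 * Real.exp (x * s ^ 2 - x * s) := by
    have a1 : 9 / 2 * (s - 1) ≤ x * s ^ 2 - x * s := by nlinarith
    have a2 : Real.exp (9 / 8 * (s - 1)) ^ 4 ≤ Real.exp (x * s ^ 2 - x * s) := by
      rw [← Real.exp_nat_mul]; apply Real.exp_le_exp.2; push_cast; linarith
    have a3 := Real.quadratic_le_exp_of_nonneg (x := 9 / 8 * (s - 1)) (by linarith)
    have a4 : 19 / 10 * s ≤ Real.exp (9 / 8 * (s - 1)) := by nlinarith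
    have a5 := pow_le_pow_left₀ (by positivity) a4 4
    have : 0 ≤ s ^ 4 := by positivity
    nlinarith
  have hmul : q ^ n * Real.exp (x * s ^ 2 - x * s) = q ^ s := by
    rw [hqn, hqs, ← Real.exp_add]; ring_nf
  rw [← hs, hsn, div_le_div_iff₀ (by linarith) (by positivity), ← hmul]
  have k2 := mul_le_mul_of_nonneg_left key hqnpos.le
  have k3 : 0 ≤ 7 * (q ^ n * Real.exp (x * s ^ 2 - x * s)) := by positivity
  have k4 := mul_le_mul_of_nonneg_left hden k3
  nlinarith
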